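/- arXiv:2007.01580 — 4 statements merged into one kernel-verified Lean document; each statement's English description precedes it below -/
import Mathlib

section
/- Let d ≥ 2 and consider the NTK recursion with bias parameter β = 0. Then the bias-free NTK is homogeneous of order 1: for all nonzero x, z ∈ ℝ^d and every h ≥ 0, Θ⁽ʰ⁾(x,z) = ‖x‖·‖z‖·Θ⁽ʰ⁾(x/‖x‖, z/‖z‖). -/
open Real MeasureTheory
open scoped RealInnerProductSpace

/-- The covariance `Σ⁽ʰ⁾` in the NTK recursion for fully connected ReLU networks. -/
noncomputable def ntkSigma (d : ℕ) : ℕ → EuclideanSpace ℝ (Fin d) → EuclideanSpace ℝ (Fin d) → ℝ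
  | 0, x, z => ⟪x, z⟫
  | h + 1, x, z =>
      (1 / Real.pi) *
          ((ntkSigma d h x z / Real.sqrt (ntkSigma d h x x * ntkSigma d h z z)) *
              (Real.pi -
                Real.arccos (ntkSigma d h x z / Real.sqrt (ntkSigma d h x x * ntkSigma d h z z))) +
            Real.sqrt
              (1 - (ntkSigma d h x z / Real.sqrt (ntkSigma d h x x * ntkSigma d h z z)) ^ 2)) *
        Real.sqrt (ntkSigma d h x x * ntkSigma d h z z)

/-- The normalized covariance `λ⁽ʰ⁾` in the NTK recursion. -/
noncomputable def ntkLam (d : ℕ) (h : ℕ) (x z : EuclideanSpace ℝ (Fin d)) : ℝ :=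
  ntkSigma d h x z / Real.sqrt (ntkSigma d h x x * ntkSigma d h z z)

/-- The derivative covariance `Σ̇⁽ʰ⁾` in the NTK recursion (meaningful for `h ≥ 1`). -/
noncomputable def ntkSigmaDot (d : ℕ) (h : ℕ) (x z : EuclideanSpace ℝ (Fin d)) : ℝ :=
  (1 / Real.pi) * (Real.pi - Real.arccos (ntkLam d (h - 1) x z))

/-- The NTK recursion `Θ⁽ʰ⁾` with bias parameter `β` (bias initialized at zero).
The NTK of an `L`-layer fully connected ReLU network is `k^{FC_β(L)} = Θ⁽ᴸ⁻¹⁾`. -/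
noncomputable def ntkTheta (d : ℕ) (β : ℝ) :
    ℕ → EuclideanSpace ℝ (Fin d) → EuclideanSpace ℝ (Fin d) → ℝ
  | 0, x, z => ⟪x, z⟫ + β ^ 2
  | h + 1, x, z =>
      ntkTheta d β h x z * ntkSigmaDot d (h + 1) x z + ntkSigma d (h + 1) x z + β ^ 2

/-!
Call a kernel homogeneous of order `α` if positive factors `a` and `b` in its two arguments
come out as `a ^ α * b ^ α`. Orders add under products and subtract under quotients, and
`√(k x x * k z z)` has the same order as `k`. The inner product has order `1`; if `Σ⁽ʰ⁾` has
order `1`, then the normalization `λ⁽ʰ⁾` has order `0`, and so has every function of it. Hence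
`Σ⁽ʰ⁺¹⁾` has order `0 + 1`. If `Θ⁽ʰ⁾` has order `1`, then so has `Θ⁽ʰ⁾ * Σ̇⁽ʰ⁺¹⁾`, and with
`β = 0` also `Θ⁽ʰ⁺¹⁾`; a bias term `β ^ 2 ≠ 0` would have order `0` instead.
-/

/-- A kernel `k` is homogeneous of order `α` if positive factors in its two arguments come out
to the power `α`. Quantifying over positive factors instead of normalizing by `‖x‖` and `‖z‖`
requires no norm on `E`; unlike the normalized form, it also constrains `k` at zero vectors. -/
def IsHomogeneousKernel {E : Type*} [SMul ℝ E] (α : ℝ) (k : E → E → ℝ) : Prop :=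
  ∀ ⦃a b : ℝ⦄, 0 < a → 0 < b → ∀ x z, k (a • x) (b • z) = a ^ α * b ^ α * k x z

theorem isHomogeneousKernel_inner {E : Type*} [SeminormedAddCommGroup E] [InnerProductSpace ℝ E] :
    IsHomogeneousKernel 1 fun x z : E ↦ ⟪x, z⟫ := by
  intro a b _ _ x z
  simp only [real_inner_smul_left, real_inner_smul_right, rpow_one]
  ring

namespace IsHomogeneousKernel

section SMul

variable {E : Type*} [SMul ℝ E] {α β : ℝ} {k l : E → E → ℝ}

theorem add (hk : IsHomogeneousKernel α k) (hl : IsHomogeneousKernel α l) :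
    IsHomogeneousKernel α fun x z ↦ k x z + l x z := by
  intro a b ha hb x z
  simp only [hk ha hb, hl ha hb, mul_add]

theorem mul (hk : IsHomogeneousKernel α k) (hl : IsHomogeneousKernel β l) :
    IsHomogeneousKernel (α + β) fun x z ↦ k x z * l x z := by
  intro a b ha hb x z
  simp only [hk ha hb, hl ha hb, rpow_add ha, rpow_add hb]
  ring

theorem div (hk : IsHomogeneousKernel α k) (hl : IsHomogeneousKernel β l) :
    IsHomogeneousKernel (α - β) fun x z ↦ k x z / l x z := by
  intro a b ha hb x z
  simp only [hk ha hb, hl ha hb, rpow_sub ha, rpow_sub hb]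
  rw [mul_div_mul_comm, mul_div_mul_comm]

theorem comp_left (hk : IsHomogeneousKernel 0 k) (f : ℝ → ℝ) :
    IsHomogeneousKernel 0 fun x z ↦ f (k x z) := by
  intro a b ha hb x z
  simp only [hk ha hb, rpow_zero, one_mul]

theorem sqrt_diag_mul_diag (hk : IsHomogeneousKernel α k) :
    IsHomogeneousKernel α fun x z ↦ √(k x x * k z z) := by
  intro a b ha hb x z
  calc √(k (a • x) (a • x) * k (b • z) (b • z))
      = √((a ^ α * b ^ α) ^ 2 * (k x x * k z z)) := by
        rw [hk ha ha, hk hb hb]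
        ring_nf
    _ = a ^ α * b ^ α * √(k x x * k z z) := by
        rw [sqrt_mul (sq_nonneg _), sqrt_sq (by positivity)]

theorem div_sqrt_diag_mul_diag (hk : IsHomogeneousKernel α k) :
    IsHomogeneousKernel 0 fun x z ↦ k x z / √(k x x * k z z) := by
  simpa only [sub_self] using hk.div hk.sqrt_diag_mul_diag

end SMul

theorem eq_norm_rpow_mul_norm_rpow_mul {E : Type*} [NormedAddCommGroup E] [NormedSpace ℝ E]
    {α : ℝ} {k : E → E → ℝ} (hk : IsHomogeneousKernel α k) {x z : E} (hx : x ≠ 0) (hz : z ≠ 0) :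
    k x z = ‖x‖ ^ α * ‖z‖ ^ α * k (‖x‖⁻¹ • x) (‖z‖⁻¹ • z) := by
  rw [← hk (norm_pos_iff.mpr hx) (norm_pos_iff.mpr hz), smul_inv_smul₀ (norm_ne_zero_iff.mpr hx),
    smul_inv_smul₀ (norm_ne_zero_iff.mpr hz)]

end IsHomogeneousKernel

theorem isHomogeneousKernel_ntkSigma (d h : ℕ) : IsHomogeneousKernel 1 (ntkSigma d h) := by
  induction h with
  | zero => exact isHomogeneousKernel_inner
  | succ h ih =>
    have angular_factor : IsHomogeneousKernel 0 fun x z ↦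
        1 / π * (ntkLam d h x z * (π - arccos (ntkLam d h x z)) + √(1 - ntkLam d h x z ^ 2)) :=
      ih.div_sqrt_diag_mul_diag.comp_left fun t ↦ 1 / π * (t * (π - arccos t) + √(1 - t ^ 2))
    rw [← zero_add (1 : ℝ)]
    exact angular_factor.mul ih.sqrt_diag_mul_diag

theorem isHomogeneousKernel_ntkLam (d h : ℕ) : IsHomogeneousKernel 0 (ntkLam d h) :=
  (isHomogeneousKernel_ntkSigma d h).div_sqrt_diag_mul_diag

theorem isHomogeneousKernel_ntkSigmaDot (d h : ℕ) : IsHomogeneousKernel 0 (ntkSigmaDot d h) :=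
  (isHomogeneousKernel_ntkLam d (h - 1)).comp_left fun t ↦ 1 / π * (π - arccos t)

theorem ntkTheta_zero_bias_zero (d : ℕ) : ntkTheta d 0 0 = fun x z ↦ ⟪x, z⟫ := by
  ext x z
  simp only [ntkTheta, ne_eq, OfNat.ofNat_ne_zero, not_false_eq_true, zero_pow, add_zero]

theorem ntkTheta_zero_bias_succ (d h : ℕ) :
    ntkTheta d 0 (h + 1) = fun x z ↦
      ntkTheta d 0 h x z * ntkSigmaDot d (h + 1) x z + ntkSigma d (h + 1) x z := by
  ext x z
  simp only [ntkTheta, ne_eq, OfNat.ofNat_ne_zero, not_false_eq_true, zero_pow, add_zero]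

theorem isHomogeneousKernel_ntkTheta_zero_bias (d h : ℕ) :
    IsHomogeneousKernel 1 (ntkTheta d 0 h) := by
  induction h with
  | zero =>
    rw [ntkTheta_zero_bias_zero]
    exact isHomogeneousKernel_inner
  | succ h ih =>
    have mul_sigmaDot : IsHomogeneousKernel 1 fun x z ↦
        ntkTheta d 0 h x z * ntkSigmaDot d (h + 1) x z := by
      simpa only [add_zero] using ih.mul (isHomogeneousKernel_ntkSigmaDot d (h + 1))
    rw [ntkTheta_zero_bias_succ]
    exact mul_sigmaDot.add (isHomogeneousKernel_ntkSigma d (h + 1))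

/-- The bias-free NTK (`β = 0`) is homogeneous of order 1: for all nonzero
`x, z ∈ ℝ^d` and every `h ≥ 0`, `Θ⁽ʰ⁾(x,z) = ‖x‖·‖z‖·Θ⁽ʰ⁾(x/‖x‖, z/‖z‖)`. -/
theorem ntk_biasfree_homogeneous_order_one (d : ℕ) (hd : 2 ≤ d)
    (x z : EuclideanSpace ℝ (Fin d)) (hx : x ≠ 0) (hz : z ≠ 0) (h : ℕ) :
    ntkTheta d 0 h x z = ‖x‖ * ‖z‖ * ntkTheta d 0 h (‖x‖⁻¹ • x) (‖z‖⁻¹ • z) := by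
  simpa only [rpow_one] using
    (isHomogeneousKernel_ntkTheta_zero_bias d h).eq_norm_rpow_mul_norm_rpow_mul hx hz
end

section
/- Let λ ∈ (−1, 1). Then the bivariate Gaussian expectation of the product of ReLUs admits the closed form: (1/(2π√(1−λ²))) · ∫_{ℝ²} max(u,0)·max(v,0)·exp(−(u² − 2λuv + v²)/(2(1−λ²))) du dv = (λ·(π − arccos λ) + √(1 − λ²))/(2π). -/
open Real MeasureTheory

/-!
With `λ = cos φ`, the correlated pair `(u, v)` is the image of a standard Gaussian vector `(x, y)`
under `u = x`, `v = x cos φ + y sin φ`. The product `σ(u)σ(v)` is then homogeneous of degree two in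
`(x, y)`, so in polar coordinates the expectation splits into a radial Gaussian moment times the
integral of `cos θ cos (θ - φ)` over the arc `φ - π / 2 ≤ θ ≤ π / 2` on which both factors are
nonnegative.
-/

section ChangeOfVariables

variable {E F : Type*} [NormedAddCommGroup F] [NormedSpace ℝ F]

lemma integral_eq_abs_det_smul_integral_comp_linearMap [NormedAddCommGroup E] [NormedSpace ℝ E]
    [FiniteDimensional ℝ E] [MeasurableSpace E] [BorelSpace E] (μ : Measure E)
    [μ.IsAddHaarMeasure] {L : E →ₗ[ℝ] E} (hL : LinearMap.det L ≠ 0) (f : E → F) :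
    ∫ x, f x ∂μ = |LinearMap.det L| • ∫ x, f (L x) ∂μ := by
  have hbij : Function.Bijective L := (LinearMap.equivOfDetNeZero L hL).bijective
  have hderiv : ∀ x ∈ Set.univ, HasFDerivWithinAt L L.toContinuousLinearMap Set.univ x :=
    fun x _ ↦ L.toContinuousLinearMap.hasFDerivAt.hasFDerivWithinAt
  have h := integral_image_eq_integral_abs_det_fderiv_smul μ .univ hderiv hbij.1.injOn f
  rwa [Set.image_univ, hbij.2.range_eq, setIntegral_univ, setIntegral_univ,
    LinearMap.det_toContinuousLinearMap, integral_smul] at h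

lemma integral_radial_smul_of_homogeneous {k : ℕ} {f : ℝ × ℝ → F}
    (hf : ∀ r : ℝ, 0 < r → ∀ p, f (r • p) = r ^ k • f p) (w : ℝ → ℝ) :
    ∫ p : ℝ × ℝ, w (p.1 ^ 2 + p.2 ^ 2) • f p =
      (∫ r in Set.Ioi (0 : ℝ), r ^ (k + 1) * w (r ^ 2)) •
        ∫ θ in Set.Ioo (-π) π, f (cos θ, sin θ) := by
  have hpolar : Set.EqOn
      (fun q : ℝ × ℝ ↦ q.1 • (w ((polarCoord.symm q).1 ^ 2 + (polarCoord.symm q).2 ^ 2) •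
        f (polarCoord.symm q)))
      (fun q ↦ (q.1 ^ (k + 1) * w (q.1 ^ 2)) • f (cos q.2, sin q.2)) polarCoord.target := by
    rintro ⟨r, θ⟩ ⟨hr, -⟩
    have hnorm : (r * cos θ) ^ 2 + (r * sin θ) ^ 2 = r ^ 2 := by
      linear_combination r ^ 2 * cos_sq_add_sin_sq θ
    have hhom : f (r * cos θ, r * sin θ) = r ^ k • f (cos θ, sin θ) :=
      hf r hr (cos θ, sin θ)
    simp only [polarCoord_symm_apply, hnorm, hhom, smul_smul]
    congr 1
    ring
  rw [← integral_comp_polarCoord_symm, setIntegral_congr_fun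
    polarCoord.open_target.measurableSet hpolar, polarCoord_target, Measure.volume_eq_prod,
    ← Measure.prod_restrict, integral_prod_smul (fun r ↦ r ^ (k + 1) * w (r ^ 2))
      (fun θ ↦ f (cos θ, sin θ))]

/-- Writing `v = l x + √(1 - l²) y` turns a pair of independent standard Gaussian variables
`(x, y)` into a pair `(x, v)` with correlation `l`. -/
lemma integral_exp_correlated_smul {l : ℝ} (hl : l ∈ Set.Ioo (-1 : ℝ) 1) (f : ℝ × ℝ → F) :
    ∫ p : ℝ × ℝ, exp (-(p.1 ^ 2 - 2 * l * p.1 * p.2 + p.2 ^ 2) / (2 * (1 - l ^ 2))) • f p =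
      √(1 - l ^ 2) • ∫ p : ℝ × ℝ, exp (-(p.1 ^ 2 + p.2 ^ 2) / 2) •
        f (p.1, l * p.1 + √(1 - l ^ 2) * p.2) := by
  have hpos : 0 < 1 - l ^ 2 := by nlinarith [hl.1, hl.2]
  have hsq : √(1 - l ^ 2) ^ 2 = 1 - l ^ 2 := sq_sqrt hpos.le
  let L : ℝ × ℝ →ₗ[ℝ] ℝ × ℝ :=
    Matrix.toLin (.finTwoProd ℝ) (.finTwoProd ℝ) !![1, 0; l, √(1 - l ^ 2)]
  have hL : ∀ p, L p = (p.1, l * p.1 + √(1 - l ^ 2) * p.2) := fun p ↦ by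
    simp [L, Matrix.toLin_finTwoProd_apply]
  have hdet : LinearMap.det L = √(1 - l ^ 2) := by
    simp [L, LinearMap.det_toLin, Matrix.det_fin_two_of]
  have hexponent : ∀ x y : ℝ, -(x ^ 2 - 2 * l * x * (l * x + √(1 - l ^ 2) * y) +
      (l * x + √(1 - l ^ 2) * y) ^ 2) / (2 * (1 - l ^ 2)) = -(x ^ 2 + y ^ 2) / 2 := fun x y ↦ by
    field_simp
    linear_combination (-y ^ 2) * hsq
  rw [integral_eq_abs_det_smul_integral_comp_linearMap volume (L := L)
    (hdet ▸ (sqrt_pos.2 hpos).ne'), hdet, abs_of_nonneg (sqrt_nonneg _)]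
  simp only [hL, hexponent]

end ChangeOfVariables

lemma integral_Ioi_pow_mul_exp_neg_mul_sq (n : ℕ) {b : ℝ} (hb : 0 < b) :
    ∫ r in Set.Ioi (0 : ℝ), r ^ (2 * n + 1) * exp (-b * r ^ 2) =
      n.factorial / (2 * b ^ (n + 1)) := by
  have hexp : ((2 * n + 1 : ℕ) + 1 : ℝ) / 2 = n + 1 := by push_cast; ring
  have h := integral_rpow_mul_exp_neg_mul_rpow (p := 2) (q := (2 * n + 1 : ℕ)) two_pos
    (by linarith [(2 * n + 1).cast_nonneg (α := ℝ)]) hb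
  rw [neg_div, hexp, Gamma_nat_eq_factorial, rpow_neg hb.le] at h
  norm_cast at h
  rw [h]
  field_simp

lemma integral_cos_mul_cos_sub (φ a b : ℝ) :
    ∫ θ in a..b, cos θ * cos (θ - φ) =
      (sin (2 * b - φ) - sin (2 * a - φ)) / 4 + (b - a) * cos φ / 2 := by
  have hprod : ∀ θ, cos θ * cos (θ - φ) = (cos φ + cos (2 * θ - φ)) / 2 := fun θ ↦ by
    have h := two_mul_cos_mul_cos θ (θ - φ)
    rw [sub_sub_cancel, ← add_sub_assoc, ← two_mul] at h
    linarith
  simp only [hprod]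
  rw [intervalIntegral.integral_div, intervalIntegral.integral_add (by simp)
    (Continuous.intervalIntegrable (by fun_prop) _ _),
    intervalIntegral.integral_comp_mul_sub _ two_ne_zero]
  simp only [intervalIntegral.integral_const, smul_eq_mul, integral_cos]
  ring

lemma max_cos_mul_max_cos_sub_eq_indicator {φ θ : ℝ} (hφ : φ ∈ Set.Icc 0 π)
    (hθ : θ ∈ Set.Ioo (-π) π) :
    max (cos θ) 0 * max (cos (θ - φ)) 0 =
      (Set.Ioc (φ - π / 2) (π / 2)).indicator (fun θ ↦ cos θ * cos (θ - φ)) θ := by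
  obtain ⟨hφ0, hφπ⟩ := hφ
  obtain ⟨hθ_lower, hθ_upper⟩ := hθ
  by_cases hmem : θ ∈ Set.Ioc (φ - π / 2) (π / 2)
  · have hcos : 0 ≤ cos θ := cos_nonneg_of_mem_Icc ⟨by linarith [hmem.1], hmem.2⟩
    have hcos_sub : 0 ≤ cos (θ - φ) :=
      cos_nonneg_of_mem_Icc ⟨by linarith [hmem.1], by linarith [hmem.2]⟩
    rw [Set.indicator_of_mem hmem, max_eq_left hcos, max_eq_left hcos_sub]
  · rw [Set.indicator_of_notMem hmem, mul_eq_zero, max_eq_right_iff, max_eq_right_iff]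
    rcases lt_or_ge (π / 2) θ with hright | hright
    · exact .inl (cos_nonpos_of_pi_div_two_le_of_le hright.le (by linarith))
    have hleft : θ ≤ φ - π / 2 := not_lt.1 fun h ↦ hmem ⟨h, hright⟩
    rcases le_or_gt θ (-(π / 2)) with hfar | hnear
    · rw [← cos_neg θ]
      exact .inl (cos_nonpos_of_pi_div_two_le_of_le (by linarith) (by linarith))
    · rw [← cos_neg (θ - φ)]
      exact .inr (cos_nonpos_of_pi_div_two_le_of_le (by linarith) (by linarith))

lemma integral_max_cos_mul_max_cos_sub {φ : ℝ} (hφ : φ ∈ Set.Icc 0 π) :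
    ∫ θ in Set.Ioo (-π) π, max (cos θ) 0 * max (cos (θ - φ)) 0 =
      ((π - φ) * cos φ + sin φ) / 2 := by
  have hsubset : Set.Ioc (φ - π / 2) (π / 2) ⊆ Set.Ioo (-π) π := fun θ hθ ↦
    ⟨by linarith [hθ.1, hφ.1, pi_pos], by linarith [hθ.2, pi_pos]⟩
  have hupper : sin (2 * (π / 2) - φ) = sin φ := by
    rw [mul_div_cancel₀ _ two_ne_zero, sin_pi_sub]
  have hlower : sin (2 * (φ - π / 2) - φ) = -sin φ := by
    rw [← sin_sub_pi]
    ring_nf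
  rw [setIntegral_congr_fun measurableSet_Ioo
      fun θ hθ ↦ max_cos_mul_max_cos_sub_eq_indicator hφ hθ,
    setIntegral_indicator measurableSet_Ioc, Set.inter_eq_right.2 hsubset,
    ← intervalIntegral.integral_of_le (by linarith [hφ.2]), integral_cos_mul_cos_sub,
    hupper, hlower]
  ring

lemma integral_exp_mul_max_mul_max_cos_add_sin {φ : ℝ} (hφ : φ ∈ Set.Icc 0 π) :
    ∫ p : ℝ × ℝ, exp (-(p.1 ^ 2 + p.2 ^ 2) / 2) *
        (max p.1 0 * max (cos φ * p.1 + sin φ * p.2) 0) =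
      (π - φ) * cos φ + sin φ := by
  let f : ℝ × ℝ → ℝ := fun p ↦ max p.1 0 * max (cos φ * p.1 + sin φ * p.2) 0
  have hf : ∀ r : ℝ, 0 < r → ∀ p, f (r • p) = r ^ 2 • f p := fun r hr p ↦ by
    have hmax (x : ℝ) : max (r * x) 0 = r * max x 0 := by
      rw [mul_max_of_nonneg _ _ hr.le, mul_zero]
    have hlin : cos φ * (r * p.1) + sin φ * (r * p.2) = r * (cos φ * p.1 + sin φ * p.2) := by ring
    simp only [f, Prod.smul_fst, Prod.smul_snd, smul_eq_mul, hlin, hmax]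
    ring
  have hradial : ∫ r in Set.Ioi (0 : ℝ), r ^ (2 + 1) * exp (-r ^ 2 / 2) = 2 := by
    have hexponent (r : ℝ) : -r ^ 2 / 2 = -(1 / 2) * r ^ 2 := by ring
    simp only [hexponent]
    exact (integral_Ioi_pow_mul_exp_neg_mul_sq 1 one_half_pos).trans (by norm_num)
  have hangular : ∫ θ in Set.Ioo (-π) π, f (cos θ, sin θ) = ((π - φ) * cos φ + sin φ) / 2 := by
    rw [← integral_max_cos_mul_max_cos_sub hφ]
    simp only [f, cos_sub, mul_comm]
  have h := integral_radial_smul_of_homogeneous hf fun t ↦ exp (-t / 2)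
  rw [hradial, hangular] at h
  exact h.trans (mul_div_cancel₀ _ two_ne_zero)

/-- first-order arc-cosine kernel identity. For `λ ∈ (−1,1)`, the bivariate
Gaussian expectation of the product of ReLUs has the closed form
`E[σ(u)σ(v)] = (λ·(π − arccos λ) + √(1 − λ²))/(2π)`. -/
theorem arccos_kernel_first_order (l : ℝ) (hl : l ∈ Set.Ioo (-1 : ℝ) 1) :
    (1 / (2 * Real.pi * Real.sqrt (1 - l ^ 2))) *
        ∫ p : ℝ × ℝ, max p.1 0 * max p.2 0 *
          Real.exp (-(p.1 ^ 2 - 2 * l * p.1 * p.2 + p.2 ^ 2) / (2 * (1 - l ^ 2))) =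
      (l * (Real.pi - Real.arccos l) + Real.sqrt (1 - l ^ 2)) / (2 * Real.pi) := by
  have hsqrt : √(1 - l ^ 2) ≠ 0 := (sqrt_pos.2 (by nlinarith [hl.1, hl.2])).ne'
  have hwhiten := integral_exp_correlated_smul hl fun p ↦ max p.1 0 * max p.2 0
  have hstandard := integral_exp_mul_max_mul_max_cos_add_sin ⟨arccos_nonneg l, arccos_le_pi l⟩
  rw [cos_arccos hl.1.le hl.2.le, sin_arccos] at hstandard
  simp only [smul_eq_mul, hstandard] at hwhiten
  simp only [mul_comm _ (exp _), hwhiten]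
  field_simp
end

section
/- Let d ≥ 2 and β ≥ 0, and define k : [−1,1] → ℝ by k(u) = (1/π)·((2u + β²)·(π − arccos u) + √(1 − u²)) + β². Then (x,z) ↦ k(⟨x,z⟩) is a positive semidefinite kernel on the unit sphere S^{d-1} ⊂ ℝ^d: for every n ∈ ℕ, every x₁, …, xₙ ∈ S^{d-1} and every c₁, …, cₙ ∈ ℝ, ∑_{i,j} c_i c_j k(⟨x_i, x_j⟩) ≥ 0. -/
open Real
open scoped RealInnerProductSpace

/-!
With the arc-cosine kernels `κ₀ u = (π − arccos u) / π` and
`κ₁ u = (u (π − arccos u) + √(1 − u²)) / π` the NTK is `κ₁ u + (u + β²) κ₀ u + β²`. Functions that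
preserve positive semidefiniteness when applied entrywise are closed under sums, products (Schur)
and composition, so it is enough to treat `κ₀` and `κ₁`. Both are primitives: `κ₁' = κ₀`, and
`π κ₀' = (1 − u²)^(-1/2)` has a binomial series with nonnegative coefficients. If `f'` preserves
positive semidefiniteness and `f 0 ≥ 0`, then so does `f`, because `t ↦ ∑ cᵢ cⱼ f (t Aᵢⱼ)` is
nonnegative at `0` and has derivative `∑ cᵢ cⱼ Aᵢⱼ f' (t Aᵢⱼ)`, which is nonnegative by the Schur
product theorem.
-/

open Set Matrix

theorem posSemidef_iff_sum_mul_nonneg {ι : Type*} [Fintype ι] {A : Matrix ι ι ℝ} :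
    A.PosSemidef ↔ A.IsSymm ∧ ∀ c : ι → ℝ, 0 ≤ ∑ i, ∑ j, c i * c j * A i j := by
  have dotProduct_eq (c : ι → ℝ) : star c ⬝ᵥ (A *ᵥ c) = ∑ i, ∑ j, c i * c j * A i j := by
    simp only [dotProduct, mulVec, Finset.mul_sum, Pi.star_apply, star_trivial]
    exact Finset.sum_congr rfl fun i _ ↦ Finset.sum_congr rfl fun j _ ↦ by ring
  simp only [posSemidef_iff_dotProduct_mulVec, dotProduct_eq, isHermitian_iff_isSymm]

/-- `f` preserves positive semidefiniteness on `s`: applied entrywise, it maps positive semidefinite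
real matrices with entries in `s` to positive semidefinite matrices. Index types are taken to be
`Fin n`, which loses nothing for finite matrices and keeps the notion free of universes. -/
def PreservesPosSemidefOn (f : ℝ → ℝ) (s : Set ℝ) : Prop :=
  ∀ ⦃n : ℕ⦄ ⦃A : Matrix (Fin n) (Fin n) ℝ⦄,
    A.PosSemidef → (∀ i j, A i j ∈ s) → (A.map f).PosSemidef

theorem preservesPosSemidefOn_iff {f : ℝ → ℝ} {s : Set ℝ} :
    PreservesPosSemidefOn f s ↔ ∀ ⦃n : ℕ⦄ ⦃A : Matrix (Fin n) (Fin n) ℝ⦄,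
      A.PosSemidef → (∀ i j, A i j ∈ s) →
        ∀ c : Fin n → ℝ, 0 ≤ ∑ i, ∑ j, c i * c j * f (A i j) := by
  refine forall₄_congr fun n A hA _ ↦ ?_
  have hsymm : (A.map f).IsSymm := (posSemidef_iff_sum_mul_nonneg.1 hA).1.map f
  simp only [posSemidef_iff_sum_mul_nonneg, hsymm, true_and, map_apply]

theorem preservesPosSemidefOn_id (s : Set ℝ) : PreservesPosSemidefOn (fun u ↦ u) s :=
  fun _ _ hA _ ↦ hA

theorem preservesPosSemidefOn_const {a : ℝ} (ha : 0 ≤ a) (s : Set ℝ) :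
    PreservesPosSemidefOn (fun _ ↦ a) s := by
  refine preservesPosSemidefOn_iff.2 fun n A _ _ c ↦ ?_
  simp only [← Finset.sum_mul, ← Finset.sum_mul_sum]
  exact mul_nonneg (mul_self_nonneg _) ha

namespace PreservesPosSemidefOn

variable {f g : ℝ → ℝ} {s t : Set ℝ}

theorem mono (hf : PreservesPosSemidefOn f t) (hst : s ⊆ t) : PreservesPosSemidefOn f s :=
  fun _ _ hA hAs ↦ hf hA fun i j ↦ hst (hAs i j)

theorem add (hf : PreservesPosSemidefOn f s) (hg : PreservesPosSemidefOn g s) :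
    PreservesPosSemidefOn (fun u ↦ f u + g u) s :=
  fun _ _ hA hAs ↦ (hf hA hAs).add (hg hA hAs)

theorem mul (hf : PreservesPosSemidefOn f s) (hg : PreservesPosSemidefOn g s) :
    PreservesPosSemidefOn (fun u ↦ f u * g u) s :=
  fun _ _ hA hAs ↦ (hf hA hAs).hadamard (hg hA hAs)

theorem comp (hf : PreservesPosSemidefOn f s) (hg : PreservesPosSemidefOn g t)
    (hgts : MapsTo g t s) : PreservesPosSemidefOn (fun u ↦ f (g u)) t :=
  fun _ _ hA hAt ↦ hf (hg hA hAt) fun i j ↦ hgts (hAt i j)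

theorem pow (hf : PreservesPosSemidefOn f s) (m : ℕ) :
    PreservesPosSemidefOn (fun u ↦ f u ^ m) s := by
  induction m with
  | zero => simpa only [pow_zero] using preservesPosSemidefOn_const zero_le_one s
  | succ m ih => simpa only [pow_succ] using ih.mul hf

theorem of_hasSum {κ : Type*} {F : κ → ℝ → ℝ} (hF : ∀ m, PreservesPosSemidefOn (F m) s)
    (hsum : ∀ u ∈ s, HasSum (fun m ↦ F m u) (f u)) : PreservesPosSemidefOn f s := by
  refine preservesPosSemidefOn_iff.2 fun n A hA hAs c ↦ ?_
  have hform : HasSum (fun m ↦ ∑ i, ∑ j, c i * c j * F m (A i j))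
      (∑ i, ∑ j, c i * c j * f (A i j)) :=
    hasSum_sum fun i _ ↦ hasSum_sum fun j _ ↦ (hsum _ (hAs i j)).mul_left _
  exact hform.nonneg fun m ↦ preservesPosSemidefOn_iff.1 (hF m) hA hAs c

theorem of_hasDerivAt {f' : ℝ → ℝ} {R : ℝ} (hR : 0 < R) (hf0 : 0 ≤ f 0)
    (hcont : ContinuousOn f (Icc (-R) R)) (hderiv : ∀ u ∈ Ioo (-R) R, HasDerivAt f (f' u) u)
    (hf' : PreservesPosSemidefOn f' (Ioo (-R) R)) : PreservesPosSemidefOn f (Icc (-R) R) := by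
  refine preservesPosSemidefOn_iff.2 fun n A hA hAR c ↦ ?_
  let Q (t : ℝ) : ℝ := ∑ i, ∑ j, c i * c j * f (t * A i j)
  let Q' (t : ℝ) : ℝ := ∑ i, ∑ j, c i * c j * (A i j * f' (t * A i j))
  have abs_entry_le (i j) : |A i j| ≤ R := abs_le.2 (hAR i j)
  have mul_entry_mem_Icc {t : ℝ} (ht : t ∈ Icc 0 1) (i j) : t * A i j ∈ Icc (-R) R := by
    rw [mem_Icc, ← abs_le, abs_mul, abs_of_nonneg ht.1]
    exact (mul_le_of_le_one_left (abs_nonneg _) ht.2).trans (abs_entry_le i j)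
  have mul_entry_mem_Ioo {t : ℝ} (ht : t ∈ Ioo 0 1) (i j) : t * A i j ∈ Ioo (-R) R := by
    rw [mem_Ioo, ← abs_lt, abs_mul, abs_of_pos ht.1]
    exact (mul_le_mul_of_nonneg_left (abs_entry_le i j) ht.1.le).trans_lt
      (mul_lt_of_lt_one_left hR ht.2)
  have hQ_cont : ContinuousOn Q (Icc 0 1) :=
    continuousOn_finsetSum _ fun i _ ↦ continuousOn_finsetSum _ fun j _ ↦ continuousOn_const.mul <|
      hcont.comp (by fun_prop) fun t ht ↦ mul_entry_mem_Icc ht i j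
  have hQ_deriv (t : ℝ) (ht : t ∈ Ioo 0 1) : HasDerivAt Q (Q' t) t := by
    refine HasDerivAt.fun_sum fun i _ ↦ HasDerivAt.fun_sum fun j _ ↦ HasDerivAt.const_mul _ ?_
    rw [mul_comm]
    exact (hderiv _ (mul_entry_mem_Ioo ht i j)).comp t (hasDerivAt_mul_const _)
  have hQ'_nonneg (t : ℝ) (ht : t ∈ Ioo 0 1) : 0 ≤ Q' t := by
    have hmap : (A ⊙ (t • A).map f').PosSemidef :=
      hA.hadamard (hf' (hA.smul ht.1.le) (mul_entry_mem_Ioo ht))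
    exact (posSemidef_iff_sum_mul_nonneg.1 hmap).2 c
  have hQ_mono : MonotoneOn Q (Icc 0 1) :=
    monotoneOn_of_hasDerivWithinAt_nonneg (convex_Icc 0 1) hQ_cont
      (fun t ht ↦ (hQ_deriv t (interior_Icc (a := (0 : ℝ)) ▸ ht)).hasDerivWithinAt)
      fun t ht ↦ hQ'_nonneg t (interior_Icc (a := (0 : ℝ)) ▸ ht)
  calc
    0 ≤ ∑ i, ∑ j, c i * c j * f 0 :=
      preservesPosSemidefOn_iff.1 (preservesPosSemidefOn_const hf0 univ) hA (fun _ _ ↦ mem_univ _) c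
    _ = Q 0 := by simp only [Q, zero_mul]
    _ ≤ Q 1 := hQ_mono (left_mem_Icc.2 zero_le_one) (right_mem_Icc.2 zero_le_one) zero_le_one
    _ = ∑ i, ∑ j, c i * c j * f (A i j) := by simp only [Q, one_mul]

end PreservesPosSemidefOn

theorem ringChoose_add_natCast_sub_one_pos {a : ℝ} (ha : 0 < a) (m : ℕ) :
    0 < Ring.choose (a + m - 1) m := by
  have hfact : m.factorial * Ring.multichoose a m = (ascPochhammer ℝ m).eval a := by
    rw [← nsmul_eq_mul, Ring.factorial_nsmul_multichoose_eq_ascPochhammer,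
      Polynomial.ascPochhammer_smeval_eq_eval]
  rw [← Ring.multichoose_eq]
  exact pos_of_mul_pos_right (hfact ▸ ascPochhammer_pos m a ha) m.factorial.cast_nonneg

theorem hasSum_ringChoose_mul_pow (a : ℝ) {u : ℝ} (hu : u ∈ Ioo (-1) 1) :
    HasSum (fun m : ℕ ↦ Ring.choose (a + m - 1) m * u ^ m) (1 / (1 - u) ^ a) := by
  have hball : u ∈ Metric.eball (0 : ℝ) 1 := by
    simpa [← ofReal_norm] using abs_lt.2 hu
  simpa [FormalMultilinearSeries.ofScalars, mul_comm] using
    (one_div_one_sub_rpow_hasFPowerSeriesOnBall_zero a).hasSum hball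

theorem preservesPosSemidefOn_one_div_one_sub_rpow {a : ℝ} (ha : 0 < a) :
    PreservesPosSemidefOn (fun u ↦ 1 / (1 - u) ^ a) (Ioo (-1) 1) :=
  .of_hasSum
    (fun m ↦ (preservesPosSemidefOn_const (ringChoose_add_natCast_sub_one_pos ha m).le _).mul
      ((preservesPosSemidefOn_id _).pow m))
    fun _ hu ↦ hasSum_ringChoose_mul_pow a hu

theorem preservesPosSemidefOn_one_div_sqrt_one_sub_sq :
    PreservesPosSemidefOn (fun u ↦ 1 / √(1 - u ^ 2)) (Ioo (-1) 1) := by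
  have sq_mem {u : ℝ} (hu : u ∈ Ioo (-1) 1) : u ^ 2 ∈ Ioo (-1) 1 :=
    ⟨by linarith [sq_nonneg u], (sq_lt_one_iff_abs_lt_one u).2 (abs_lt.2 hu)⟩
  simpa only [sqrt_eq_rpow] using
    (preservesPosSemidefOn_one_div_one_sub_rpow one_half_pos).comp
      ((preservesPosSemidefOn_id _).pow 2) fun _ hu ↦ sq_mem hu

/-- The arc-cosine kernel of degree `0` (Cho–Saul) as a function of the cosine `u`: twice
the Gaussian second moment of step activations. -/
noncomputable def arcCosineKernelZero (u : ℝ) : ℝ := (π - arccos u) / π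

/-- The arc-cosine kernel of degree `1` (Cho–Saul) as a function of the cosine `u`: twice
the Gaussian second moment of ReLU activations. -/
noncomputable def arcCosineKernelOne (u : ℝ) : ℝ := (u * (π - arccos u) + √(1 - u ^ 2)) / π

theorem hasDerivAt_arcCosineKernelZero {u : ℝ} (hu : u ∈ Ioo (-1) 1) :
    HasDerivAt arcCosineKernelZero (1 / π * (1 / √(1 - u ^ 2))) u := by
  refine (((hasDerivAt_arccos hu.1.ne' hu.2.ne).const_sub π).div_const π).congr_deriv ?_
  ring

theorem hasDerivAt_arcCosineKernelOne {u : ℝ} (hu : u ∈ Ioo (-1) 1) :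
    HasDerivAt arcCosineKernelOne (arcCosineKernelZero u) u := by
  have hpos : 0 < 1 - u ^ 2 := sub_pos.2 ((sq_lt_one_iff_abs_lt_one u).2 (abs_lt.2 hu))
  have hmul : HasDerivAt (fun v ↦ v * (π - arccos v)) (π - arccos u + u / √(1 - u ^ 2)) u := by
    refine ((hasDerivAt_id' u).mul
      ((hasDerivAt_arccos hu.1.ne' hu.2.ne).const_sub π)).congr_deriv ?_
    ring
  have hsqrt : HasDerivAt (fun v ↦ √(1 - v ^ 2)) (-(u / √(1 - u ^ 2))) u := by
    refine (((hasDerivAt_pow 2 u).const_sub 1).sqrt hpos.ne').congr_deriv ?_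
    field
  refine ((hmul.add hsqrt).div_const π).congr_deriv ?_
  rw [add_neg_cancel_right, arcCosineKernelZero]

theorem preservesPosSemidefOn_arcCosineKernelZero :
    PreservesPosSemidefOn arcCosineKernelZero (Icc (-1) 1) := by
  have hcont : Continuous arcCosineKernelZero := by unfold arcCosineKernelZero; fun_prop
  refine .of_hasDerivAt one_pos (div_nonneg (sub_nonneg.2 (arccos_le_pi 0)) pi_pos.le)
    hcont.continuousOn (fun u hu ↦ hasDerivAt_arcCosineKernelZero hu) ?_
  exact (preservesPosSemidefOn_const (by positivity) _).mul
    preservesPosSemidefOn_one_div_sqrt_one_sub_sq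

theorem preservesPosSemidefOn_arcCosineKernelOne :
    PreservesPosSemidefOn arcCosineKernelOne (Icc (-1) 1) := by
  have hcont : Continuous arcCosineKernelOne := by unfold arcCosineKernelOne; fun_prop
  have hzero : 0 ≤ arcCosineKernelOne 0 := by
    rw [arcCosineKernelOne, zero_mul, zero_add]
    positivity
  exact .of_hasDerivAt one_pos hzero hcont.continuousOn
    (fun u hu ↦ hasDerivAt_arcCosineKernelOne hu)
    (preservesPosSemidefOn_arcCosineKernelZero.mono Ioo_subset_Icc_self)

/-- The NTK of the two-layer ReLU network with bias parameter `β`, as a function of the inner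
product `u` of two unit inputs. -/
noncomputable def twoLayerNTK (β u : ℝ) : ℝ :=
  (1 / π) * ((2 * u + β ^ 2) * (π - arccos u) + √(1 - u ^ 2)) + β ^ 2

theorem twoLayerNTK_eq_arcCosineKernel (β u : ℝ) :
    twoLayerNTK β u =
      arcCosineKernelOne u + (u + β ^ 2) * arcCosineKernelZero u + β ^ 2 := by
  rw [twoLayerNTK, arcCosineKernelOne, arcCosineKernelZero]
  ring

theorem preservesPosSemidefOn_twoLayerNTK (β : ℝ) :
    PreservesPosSemidefOn (twoLayerNTK β) (Icc (-1) 1) := by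
  have hβ := preservesPosSemidefOn_const (sq_nonneg β) (Icc (-1) 1)
  have hsum := (preservesPosSemidefOn_arcCosineKernelOne.add
    (((preservesPosSemidefOn_id _).add hβ).mul preservesPosSemidefOn_arcCosineKernelZero)).add hβ
  simpa only [← twoLayerNTK_eq_arcCosineKernel] using hsum

theorem ntk_two_layer_psd_general {E : Type*} [SeminormedAddCommGroup E] [InnerProductSpace ℝ E]
    (β : ℝ) {n : ℕ} (x : Fin n → E) (hx : ∀ i, ‖x i‖ ≤ 1) (c : Fin n → ℝ) :
    0 ≤ ∑ i, ∑ j, c i * c j * twoLayerNTK β ⟪x i, x j⟫ := by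
  have inner_mem (i j) : gram ℝ x i j ∈ Icc (-1) 1 :=
    abs_le.1 <| (abs_real_inner_le_norm (x i) (x j)).trans <|
      mul_le_one₀ (hx i) (norm_nonneg _) (hx j)
  exact preservesPosSemidefOn_iff.1 (preservesPosSemidefOn_twoLayerNTK β)
    (posSemidef_gram ℝ x) inner_mem c

/-- The closed-form two-layer NTK
`k(u) = (1/π)·((2u + β²)·(π − arccos u) + √(1 − u²)) + β²` defines a positive semidefinite
kernel `(x,z) ↦ k(⟪x,z⟫)` on the unit sphere `S^{d-1} ⊂ ℝ^d`. -/
theorem ntk_two_layer_psd (d : ℕ) (hd : 2 ≤ d) (β : ℝ) (hβ : 0 ≤ β)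
    (n : ℕ) (x : Fin n → EuclideanSpace ℝ (Fin d)) (hx : ∀ i, ‖x i‖ = 1) (c : Fin n → ℝ) :
    0 ≤ ∑ i, ∑ j, c i * c j *
      ((1 / Real.pi) * ((2 * ⟪x i, x j⟫ + β ^ 2) * (Real.pi - Real.arccos ⟪x i, x j⟫) +
          Real.sqrt (1 - ⟪x i, x j⟫ ^ 2)) + β ^ 2) :=
  ntk_two_layer_psd_general β x (fun i ↦ (hx i).le) c
end

section
/- Let d ≥ 1 be an integer and c > 0. For every w ∈ ℝ^d, ∫_{ℝ^d} e^{−c‖x‖} e^{−i⟨w,x⟩} dx = (2π)^d · (Γ((d+1)/2)/π^{(d+1)/2}) · c / (c² + ‖w‖²)^{(d+1)/2}. Equivalently, the Fourier transform Φ(w) = (1/(2π)^d) ∫_{ℝ^d} e^{−c‖x‖} e^{−i⟨x,w⟩} dx of the radial function f(x) = e^{−c‖x‖} equals C·(1 + ‖w‖²/c²)^{−(d+1)/2} with C = Γ((d+1)/2)/(π^{(d+1)/2} c^d) > 0. -/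
open Real MeasureTheory
open scoped RealInnerProductSpace

/-!
`e^{-c‖x‖}` is a superposition of Gaussians,
`e^{-cr} = (2c/√π) ∫₀^∞ e^{-(ct)²} e^{-(r/2t)²} dt`.
This is the Cauchy–Schlömilch identity `∫₀^∞ f(at - b/t) dt = a⁻¹ ∫₀^∞ f` (`f` even) applied to
`f(u) = e^{-u²}`. In dimension `n` the Gaussian `e^{-(‖x‖/2t)²}` has Fourier transform
`(2√π t)ⁿ e^{-(t‖w‖)²}`, so after Fubini only the Gamma integral `∫₀^∞ tⁿ e^{-(c² + ‖w‖²)t²} dt`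
remains.
-/

section CauchySchlomilch

open Set

/-- The positive root `t` of `t - b / t = u` when `0 < b`, that is, of `t ^ 2 - u * t - b = 0`. It
inverts the substitution `u = t - b / t` in the Cauchy–Schlömilch identity. -/
noncomputable def subDivInv (b u : ℝ) : ℝ := (u + √(u ^ 2 + 4 * b)) / 2

variable {b : ℝ}

lemma abs_lt_sqrt_sq_add (hb : 0 < b) (u : ℝ) : |u| < √(u ^ 2 + b) := by
  rw [← sqrt_sq_eq_abs]
  exact sqrt_lt_sqrt (sq_nonneg u) (lt_add_of_pos_right _ hb)

lemma subDivInv_pos (hb : 0 < b) (u : ℝ) : 0 < subDivInv b u := by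
  have := abs_lt_sqrt_sq_add (mul_pos four_pos hb) u
  unfold subDivInv
  linarith [neg_abs_le u]

lemma subDivInv_sub_div (hb : 0 < b) (u : ℝ) : subDivInv b u - b / subDivInv b u = u := by
  have hsq : √(u ^ 2 + 4 * b) ^ 2 = u ^ 2 + 4 * b := sq_sqrt (by positivity)
  have hquad : subDivInv b u ^ 2 - b = u * subDivInv b u := by
    unfold subDivInv
    linear_combination hsq / 4
  have := (subDivInv_pos hb u).ne'
  field_simp
  linear_combination hquad

lemma subDivInv_apply_sub_div (hb : 0 ≤ b) {t : ℝ} (ht : 0 < t) : subDivInv b (t - b / t) = t := by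
  have hsq : (t - b / t) ^ 2 + 4 * b = (t + b / t) ^ 2 := by
    field_simp
    ring
  rw [subDivInv, hsq, sqrt_sq (by positivity)]
  ring

lemma range_subDivInv (hb : 0 < b) : range (subDivInv b) = Ioi 0 :=
  Subset.antisymm (range_subset_iff.2 (subDivInv_pos hb))
    fun t ht ↦ ⟨t - b / t, subDivInv_apply_sub_div hb.le ht⟩

lemma hasDerivAt_subDivInv (hb : 0 < b) (u : ℝ) :
    HasDerivAt (subDivInv b) ((1 + u / √(u ^ 2 + 4 * b)) / 2) u := by
  have hsqrt := ((hasDerivAt_pow 2 u).add_const (4 * b)).sqrt (by positivity)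
  convert! ((hasDerivAt_id u).add hsqrt).div_const 2 using 2
  push_cast
  field_simp

lemma abs_div_sqrt_sq_add_lt_one (hb : 0 < b) (u : ℝ) : |u / √(u ^ 2 + b)| < 1 := by
  rw [abs_div, abs_of_nonneg (sqrt_nonneg _), div_lt_one (by positivity)]
  exact abs_lt_sqrt_sq_add hb u

variable {E : Type*} [NormedAddCommGroup E] [NormedSpace ℝ E] {f : ℝ → E}

lemma integral_Ioi_comp_sub_div_eq_integral (hb : 0 < b) (f : ℝ → E) :
    ∫ t in Ioi 0, f (t - b / t) = ∫ u, ((1 + u / √(u ^ 2 + 4 * b)) / 2) • f u := by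
  have hinj : Function.Injective (subDivInv b) :=
    Function.LeftInverse.injective (g := fun t ↦ t - b / t) (subDivInv_sub_div hb)
  rw [← range_subDivInv hb, ← image_univ,
    integral_image_eq_integral_abs_deriv_smul .univ
      (fun u _ ↦ (hasDerivAt_subDivInv hb u).hasDerivWithinAt) hinj.injOn, setIntegral_univ]
  congr with u
  have := abs_lt.1 (abs_div_sqrt_sq_add_lt_one (mul_pos four_pos hb) u)
  rw [subDivInv_sub_div hb, abs_of_pos (by linarith)]

lemma integral_eq_integral_Ioi_add_comp_neg (hf : Integrable f) :
    ∫ u, f u = ∫ u in Ioi 0, (f u + f (-u)) := by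
  rw [integral_add hf.integrableOn hf.comp_neg.integrableOn, integral_comp_neg_Ioi, neg_zero,
    add_comm, intervalIntegral.integral_Iic_add_Ioi hf.integrableOn hf.integrableOn]

lemma integral_Ioi_comp_sub_div (hb : 0 < b) (hf : Integrable f) (hf_even : f.Even) :
    ∫ t in Ioi 0, f (t - b / t) = ∫ t in Ioi 0, f t := by
  have hint : Integrable fun u ↦ ((1 + u / √(u ^ 2 + 4 * b)) / 2) • f u := by
    refine hf.bdd_smul 1 (Measurable.aestronglyMeasurable (by fun_prop)) (.of_forall fun u ↦ ?_)
    have := abs_lt.1 (abs_div_sqrt_sq_add_lt_one (mul_pos four_pos hb) u)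
    rw [norm_eq_abs, abs_le]
    constructor <;> linarith
  rw [integral_Ioi_comp_sub_div_eq_integral hb, integral_eq_integral_Ioi_add_comp_neg hint]
  -- The weights at `u` and `-u` add up to `1`.
  congr with u
  rw [hf_even, neg_sq, ← add_smul]
  convert one_smul ℝ (f u) using 2
  ring

lemma integral_Ioi_comp_mul_sub_div {a : ℝ} (ha : 0 < a) (hb : 0 ≤ b) (hf : Integrable f)
    (hf_even : f.Even) :
    ∫ t in Ioi 0, f (a * t - b / t) = a⁻¹ • ∫ t in Ioi 0, f t := by
  obtain rfl | hb := hb.eq_or_lt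
  · simpa using integral_comp_mul_left_Ioi f 0 ha
  calc ∫ t in Ioi 0, f (a * t - b / t)
      = ∫ t in Ioi 0, f (a * t - a * b / (a * t)) := by simp_rw [mul_div_mul_left b _ ha.ne']
    _ = a⁻¹ • ∫ t in Ioi 0, f (t - a * b / t) := by
      rw [integral_comp_mul_left_Ioi (fun t ↦ f (t - a * b / t)) 0 ha, mul_zero]
    _ = a⁻¹ • ∫ t in Ioi 0, f t := by rw [integral_Ioi_comp_sub_div (mul_pos ha hb) hf hf_even]

end CauchySchlomilch

section GaussianIntegrals

open Set

lemma integral_Ioi_exp_neg_mul_sq_mul_exp_neg_div_sq {c r : ℝ} (hc : 0 < c) (hr : 0 ≤ r) :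
    ∫ t in Ioi 0, rexp (-(c * t) ^ 2) * rexp (-(r / (2 * t)) ^ 2) =
      √π / (2 * c) * rexp (-c * r) := by
  have hgauss : Integrable fun u : ℝ ↦ rexp (-u ^ 2) := by
    simpa using integrable_exp_neg_mul_sq one_pos
  have hsquare : ∀ t ∈ Ioi (0 : ℝ), rexp (-(c * t) ^ 2) * rexp (-(r / (2 * t)) ^ 2) =
      rexp (-(c * t - r / 2 / t) ^ 2) * rexp (-c * r) := fun t ht ↦ by
    rw [← Real.exp_add, ← Real.exp_add]
    have := (mem_Ioi.1 ht).ne'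
    congr 1
    field_simp
    ring
  rw [setIntegral_congr_fun measurableSet_Ioi hsquare, integral_mul_const,
    integral_Ioi_comp_mul_sub_div hc (by positivity) hgauss fun u ↦ by rw [neg_sq]]
  have := integral_gaussian_Ioi 1
  simp only [neg_one_mul, div_one] at this
  rw [this, smul_eq_mul]
  field_simp

lemma integrableOn_Ioi_pow_mul_exp_neg_mul_sq {a : ℝ} (ha : 0 < a) (n : ℕ) :
    IntegrableOn (fun t : ℝ ↦ t ^ n * rexp (-a * t ^ 2)) (Ioi 0) := by
  simpa only [rpow_natCast] using
    integrableOn_rpow_mul_exp_neg_mul_sq ha (neg_one_lt_zero.trans_le n.cast_nonneg)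

lemma integral_Ioi_pow_mul_exp_neg_mul_sq_s10 {a : ℝ} (ha : 0 < a) (n : ℕ) :
    ∫ t in Ioi (0 : ℝ), t ^ n * rexp (-a * t ^ 2) =
      Gamma ((n + 1) / 2) / (2 * a ^ (((n : ℝ) + 1) / 2)) := by
  have h := integral_rpow_mul_exp_neg_mul_rpow two_pos
    (neg_one_lt_zero.trans_le (n.cast_nonneg : (0 : ℝ) ≤ n)) ha
  simp only [rpow_natCast, rpow_two] at h
  rw [h, neg_div, rpow_neg ha.le]
  field_simp

lemma integral_Ioi_pow_mul_exp_neg_sq_mul_exp_neg_sq {a : ℝ} (ha : 0 < a) (b : ℝ) (n : ℕ) :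
    ∫ t in Ioi (0 : ℝ), (t : ℂ) ^ n * (rexp (-(a * t) ^ 2) : ℂ) * (rexp (-(t * b) ^ 2) : ℂ) =
      ((Gamma ((n + 1) / 2) / (2 * (a ^ 2 + b ^ 2) ^ (((n : ℝ) + 1) / 2)) : ℝ) : ℂ) := by
  rw [← integral_Ioi_pow_mul_exp_neg_mul_sq_s10 (by positivity), ← integral_complex_ofReal]
  congr with t
  rw [mul_assoc, ← Complex.ofReal_mul, ← Real.exp_add]
  push_cast
  ring_nf

end GaussianIntegrals

section GaussianMixture

open Set
open Module (finrank)

/-- The superposition with weight `g` of the radial profiles `e^{-(r / 2t)²}` of the Gaussians of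
variance `2t²`; the function on an inner product space is `v ↦ gaussianMixture g ‖v‖`. With this
normalization the Fourier transform of each component is a multiple of `e^{-(t‖w‖)²}`. -/
noncomputable def gaussianMixture (g : ℝ → ℂ) (r : ℝ) : ℂ :=
  ∫ t in Ioi 0, g t * (rexp (-(r / (2 * t)) ^ 2) : ℂ)

lemma exp_neg_mul_eq_gaussianMixture {c r : ℝ} (hc : 0 < c) (hr : 0 ≤ r) :
    (rexp (-c * r) : ℂ) =
      (2 * c / √π : ℝ) * gaussianMixture (fun t ↦ (rexp (-(c * t) ^ 2) : ℂ)) r := by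
  simp only [gaussianMixture, ← Complex.ofReal_mul, integral_complex_ofReal,
    integral_Ioi_exp_neg_mul_sq_mul_exp_neg_div_sq hc hr]
  congr 1
  field_simp

variable {V : Type*} [NormedAddCommGroup V] [InnerProductSpace ℝ V] [FiniteDimensional ℝ V]
  [MeasurableSpace V] [BorelSpace V]

lemma integral_exp_neg_norm_div_sq_mul_cexp_inner {t : ℝ} (ht : 0 < t) (w : V) :
    ∫ v : V, (rexp (-(‖v‖ / (2 * t)) ^ 2) : ℂ) * Complex.exp (-Complex.I * (⟪w, v⟫ : ℝ)) =
      (((2 * √π * t) ^ finrank ℝ V * rexp (-(t * ‖w‖) ^ 2) : ℝ) : ℂ) := by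
  have hb : 0 < (((4 * t ^ 2)⁻¹ : ℝ) : ℂ).re := by
    rw [Complex.ofReal_re]
    positivity
  have ht' : (t : ℂ) ≠ 0 := mod_cast ht.ne'
  have hscale : π / (4 * t ^ 2)⁻¹ = (2 * √π * t) ^ 2 := by
    rw [div_inv_eq_mul, mul_pow, mul_pow, sq_sqrt pi_pos.le]
    ring
  have hpow : ((π : ℂ) / ((4 * t ^ 2)⁻¹ : ℝ)) ^ (finrank ℝ V / 2 : ℂ) =
      ((2 * √π * t) ^ finrank ℝ V : ℝ) := by
    rw [← Complex.ofReal_div, hscale, ← Complex.ofReal_natCast, ← Complex.ofReal_ofNat,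
      ← Complex.ofReal_div, ← Complex.ofReal_cpow (by positivity),
      rpow_div_two_eq_sqrt _ (by positivity), sqrt_sq (by positivity), rpow_natCast]
  convert GaussianFourier.integral_cexp_neg_mul_sq_norm_add hb (-Complex.I) w using 1
  · congr with v
    rw [Complex.ofReal_exp, ← Complex.exp_add]
    push_cast
    congr 2
    field_simp
    ring
  · rw [hpow, Complex.ofReal_mul, Complex.ofReal_exp, neg_sq, Complex.I_sq]
    push_cast
    congr 2
    field_simp

lemma integral_exp_neg_norm_div_sq {t : ℝ} (ht : 0 < t) :
    ∫ v : V, rexp (-(‖v‖ / (2 * t)) ^ 2) = (2 * √π * t) ^ finrank ℝ V := by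
  have := integral_exp_neg_norm_div_sq_mul_cexp_inner ht (0 : V)
  simp only [inner_zero_left, Complex.ofReal_zero, mul_zero, Complex.exp_zero, mul_one, norm_zero,
    integral_complex_ofReal, Complex.ofReal_inj] at this
  simpa using this

lemma integrable_exp_neg_norm_div_sq {t : ℝ} (ht : 0 < t) :
    Integrable fun v : V ↦ rexp (-(‖v‖ / (2 * t)) ^ 2) :=
  .of_integral_ne_zero (by rw [integral_exp_neg_norm_div_sq ht]; positivity)

lemma integrable_prod_mul_exp_neg_norm_div_sq {g : ℝ → ℂ}
    (hg : IntegrableOn (fun t : ℝ ↦ (t : ℂ) ^ finrank ℝ V * g t) (Ioi 0)) :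
    Integrable (fun p : V × ℝ ↦ g p.2 * (rexp (-(‖p.1‖ / (2 * p.2)) ^ 2) : ℂ))
      (volume.prod (volume.restrict (Ioi 0))) := by
  have hg_meas : AEStronglyMeasurable g (volume.restrict (Ioi 0)) := by
    have hpow : Measurable fun t : ℝ ↦ ((t : ℂ) ^ finrank ℝ V)⁻¹ := by fun_prop
    refine (hpow.aestronglyMeasurable.mul hg.aestronglyMeasurable).congr ?_
    filter_upwards [ae_restrict_mem measurableSet_Ioi] with t ht
    exact inv_mul_cancel_left₀ (pow_ne_zero _ (mod_cast (mem_Ioi.1 ht).ne')) _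
  have hexp : Measurable fun p : V × ℝ ↦ (rexp (-(‖p.1‖ / (2 * p.2)) ^ 2) : ℂ) := by fun_prop
  have hmeas : AEStronglyMeasurable
      (fun p : V × ℝ ↦ g p.2 * (rexp (-(‖p.1‖ / (2 * p.2)) ^ 2) : ℂ))
      (volume.prod (volume.restrict (Ioi 0))) :=
    hg_meas.comp_snd.mul hexp.aestronglyMeasurable
  refine (integrable_prod_iff' hmeas).2 ⟨?_, ?_⟩
  · filter_upwards [ae_restrict_mem measurableSet_Ioi] with t ht
    exact (integrable_exp_neg_norm_div_sq ht).ofReal.const_mul (g t)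
  · refine IntegrableOn.congr_fun (hg.norm.const_mul ((2 * √π) ^ finrank ℝ V)) (fun t ht ↦ ?_)
      measurableSet_Ioi
    simp only [norm_mul, norm_pow, Complex.norm_real, norm_of_nonneg (exp_nonneg _),
      integral_const_mul, integral_exp_neg_norm_div_sq ht, norm_of_nonneg (mem_Ioi.1 ht).le]
    ring

theorem integral_gaussianMixture_mul_cexp_inner {g : ℝ → ℂ}
    (hg : IntegrableOn (fun t : ℝ ↦ (t : ℂ) ^ finrank ℝ V * g t) (Ioi 0)) (w : V) :
    ∫ v : V, gaussianMixture g ‖v‖ * Complex.exp (-Complex.I * (⟪w, v⟫ : ℝ)) =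
      (2 * √π) ^ finrank ℝ V *
        ∫ t in Ioi (0 : ℝ), (t : ℂ) ^ finrank ℝ V * g t * (rexp (-(t * ‖w‖) ^ 2) : ℂ) := by
  have hint : Integrable (Function.uncurry fun (v : V) t ↦
      g t * (rexp (-(‖v‖ / (2 * t)) ^ 2) : ℂ) * Complex.exp (-Complex.I * (⟪w, v⟫ : ℝ)))
      (volume.prod (volume.restrict (Ioi 0))) := by
    refine (integrable_prod_mul_exp_neg_norm_div_sq hg).mul_bdd (c := 1)
      (Measurable.aestronglyMeasurable (by fun_prop)) (.of_forall fun p ↦ ?_)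
    simp [Complex.norm_exp]
  simp_rw [gaussianMixture, ← integral_mul_const]
  rw [integral_integral_swap hint, ← integral_const_mul]
  refine setIntegral_congr_fun measurableSet_Ioi fun t ht ↦ ?_
  simp only [mul_assoc]
  rw [integral_const_mul, integral_exp_neg_norm_div_sq_mul_cexp_inner ht]
  push_cast
  ring

theorem laplace_radial_fourier_transform_general {c : ℝ} (hc : 0 < c) (w : V) :
    ∫ v : V, (rexp (-c * ‖v‖) : ℂ) * Complex.exp (-Complex.I * (⟪w, v⟫ : ℝ)) =
      (((2 * π) ^ finrank ℝ V *
          (Gamma ((finrank ℝ V + 1) / 2) / π ^ (((finrank ℝ V : ℝ) + 1) / 2)) *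
          c / (c ^ 2 + ‖w‖ ^ 2) ^ (((finrank ℝ V : ℝ) + 1) / 2) : ℝ) : ℂ) := by
  have hweight : IntegrableOn (fun t : ℝ ↦ (t : ℂ) ^ finrank ℝ V * (rexp (-(c * t) ^ 2) : ℂ))
      (Ioi 0) := by
    have := (integrableOn_Ioi_pow_mul_exp_neg_mul_sq (pow_pos hc 2) (finrank ℝ V)).ofReal (𝕜 := ℂ)
    simpa [IntegrableOn, mul_pow] using this
  have hpi : (2 * π) ^ finrank ℝ V = (2 * √π) ^ finrank ℝ V * √π ^ finrank ℝ V := by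
    rw [← mul_pow, mul_assoc, mul_self_sqrt pi_pos.le]
  simp_rw [exp_neg_mul_eq_gaussianMixture hc (norm_nonneg _), mul_assoc]
  rw [integral_const_mul, integral_gaussianMixture_mul_cexp_inner hweight,
    integral_Ioi_pow_mul_exp_neg_sq_mul_exp_neg_sq hc, hpi, rpow_div_two_eq_sqrt _ pi_pos.le]
  norm_cast
  field_simp
  rw [pow_succ']

end GaussianMixture

/-- Fourier transform of the radial profile of the Laplace kernel. For `c > 0`
and `w ∈ ℝ^d`,
`∫_{ℝ^d} e^{−c‖x‖} e^{−i⟨w,x⟩} dx = (2π)^d · (Γ((d+1)/2)/π^{(d+1)/2}) · c/(c² + ‖w‖²)^{(d+1)/2}`. -/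
theorem laplace_radial_fourier_transform (d : ℕ) (hd : 1 ≤ d) (c : ℝ) (hc : 0 < c)
    (w : EuclideanSpace ℝ (Fin d)) :
    ∫ x : EuclideanSpace ℝ (Fin d),
        (Real.exp (-c * ‖x‖) : ℂ) * Complex.exp (-Complex.I * (⟪w, x⟫ : ℝ)) =
      (((2 * Real.pi) ^ d * (Real.Gamma (((d : ℝ) + 1) / 2) / Real.pi ^ (((d : ℝ) + 1) / 2)) *
          c / (c ^ 2 + ‖w‖ ^ 2) ^ (((d : ℝ) + 1) / 2) : ℝ) : ℂ) := by
  simpa only [finrank_euclideanSpace_fin] using laplace_radial_fourier_transform_general hc w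
end
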